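/- Let Φ be an irreducible reduced root system with base {α₁,...,α_ℓ}. For irreducible subsets I, J of the index set [ℓ], neither of type A, one has J ⊆ I if and only if θ_J ≤ θ_I in the dominant order, where θ_I denotes the highest short root of the root subsystem Φ_I generated by {α_i : i ∈ I}. -/

import Mathlib

open scoped RealInnerProductSpace

noncomputable section

variable {E : Type*} [NormedAddCommGroup E] [InnerProductSpace ℝ E]

/-- The pairing `⟨x, α∨⟩ = 2(x,α)/(α,α)`. -/
def cpair (x α : E) : ℝ := 2 * ⟪x, α⟫ / ⟪α, α⟫

/-- Reflection in the hyperplane orthogonal to `α`. -/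
def wrefl (α x : E) : E := x - cpair x α • α

/-- An irreducible reduced root system with a chosen base `simple : Fin ℓ → E`. -/
structure RootSystemData (ℓ : ℕ) (E : Type*) [NormedAddCommGroup E]
    [InnerProductSpace ℝ E] where
  roots : Finset E
  simple : Fin ℓ → E
  simple_mem : ∀ i, simple i ∈ roots
  root_ne_zero : ∀ α ∈ roots, α ≠ 0
  reduced : ∀ α ∈ roots, (2 : ℝ) • α ∉ roots
  cpair_int : ∀ α ∈ roots, ∀ β ∈ roots, ∃ n : ℤ, cpair β α = (n : ℝ)
  reflect_mem : ∀ α ∈ roots, ∀ β ∈ roots, wrefl α β ∈ roots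
  simple_indep : LinearIndependent ℝ simple
  root_decomp : ∀ α ∈ roots,
    (∃ c : Fin ℓ → ℕ, α = ∑ i, (c i : ℝ) • simple i) ∨
    (∃ c : Fin ℓ → ℕ, α = -∑ i, (c i : ℝ) • simple i)
  irred : ∀ S : Finset (Fin ℓ), S.Nonempty →
    (∀ i ∈ S, ∀ j ∉ S, ⟪simple i, simple j⟫ = 0) → S = Finset.univ

namespace RootSystemData

variable {ℓ : ℕ} (R : RootSystemData ℓ E)

/-- Integral weights. -/
def IsIntegral (x : E) : Prop := ∀ α ∈ R.roots, ∃ n : ℤ, cpair x α = (n : ℝ)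

/-- Dominant (integral) weights. -/
def IsDominant (x : E) : Prop :=
  R.IsIntegral x ∧ ∀ i, 0 ≤ cpair x (R.simple i)

/-- The dominant order: `R.wle μ λ` means `μ ≤ λ`, i.e. `λ - μ` is a nonnegative
integer combination of the simple roots. -/
def wle (μ lam : E) : Prop :=
  ∃ c : Fin ℓ → ℕ, lam - μ = ∑ i, (c i : ℝ) • R.simple i

/-- Minuscule weights: nonzero dominant weights all of whose pairings with roots
lie in `{0, 1, -1}`. -/
def IsMinuscule (x : E) : Prop :=
  R.IsDominant x ∧ x ≠ 0 ∧
  ∀ α ∈ R.roots, cpair x α = 0 ∨ cpair x α = 1 ∨ cpair x α = -1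

/-- `y` lies in the Weyl group orbit of `x`. -/
def InWeylOrbit (x y : E) : Prop :=
  ∃ l : List E, (∀ α ∈ l, α ∈ R.roots) ∧ y = l.foldr wrefl x

/-- `R.IsDualOf μ λ` expresses `μ = -w₀ λ`: `μ` is the dominant element of the
Weyl orbit of `-λ`. -/
def IsDualOf (μ lam : E) : Prop := R.IsDominant μ ∧ R.InWeylOrbit (-lam) μ

/-- Low triples of dominant weights. -/
def LowTriple (lam mu nu : E) : Prop :=
  R.IsDominant lam ∧ R.IsDominant mu ∧ R.IsDominant nu ∧
  (∀ lam' mu' : E, R.IsDominant lam' → R.IsDominant mu' →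
    R.wle lam' lam → R.wle mu' mu → R.wle nu (lam' + mu') → lam' = lam ∧ mu' = mu) ∧
  R.wle (nu + ∑ i, R.simple i) (lam + mu)

/-- Covering relation in the poset of dominant weights. -/
def Covers (lam mu : E) : Prop :=
  R.IsDominant lam ∧ R.IsDominant mu ∧ R.wle mu lam ∧ mu ≠ lam ∧
  ∀ η, R.IsDominant η → R.wle mu η → R.wle η lam → η = mu ∨ η = lam

/-- A root of the subsystem `Φ_I` generated by the simple roots indexed by `I`. -/
def IsRootOf (I : Finset (Fin ℓ)) (β : E) : Prop :=
  β ∈ R.roots ∧ ∃ c : Fin ℓ → ℤ, (∀ i, c i ≠ 0 → i ∈ I) ∧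
    β = ∑ i, (c i : ℝ) • R.simple i

/-- A short root of `Φ_I`. -/
def IsShortRootOf (I : Finset (Fin ℓ)) (β : E) : Prop :=
  R.IsRootOf I β ∧ ∀ γ, R.IsRootOf I γ → ⟪β, β⟫ ≤ ⟪γ, γ⟫

/-- `θ` is the highest short root of `Φ_I`. -/
def IsHighestShortRoot (I : Finset (Fin ℓ)) (θ : E) : Prop :=
  R.IsShortRootOf I θ ∧ ∀ γ, R.IsShortRootOf I γ → R.wle γ θ

/-- `I` indexes a connected (i.e. irreducible) subdiagram of the Dynkin diagram. -/
def Connected (I : Finset (Fin ℓ)) : Prop :=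
  I.Nonempty ∧ ∀ S ⊆ I, S.Nonempty →
    (∀ i ∈ S, ∀ j ∈ I, j ∉ S → ⟪R.simple i, R.simple j⟫ = 0) → S = I

/-- `I` is of type A: the Cartan matrix of `Φ_I` is that of a type `A` chain. -/
def IsTypeASub (I : Finset (Fin ℓ)) : Prop :=
  ∃ e : Fin I.card ≃ {i // i ∈ I}, ∀ a b : Fin I.card,
    cpair (R.simple (e b).1) (R.simple (e a).1) =
      if a = b then 2
      else if (a : ℕ) + 1 = (b : ℕ) ∨ (b : ℕ) + 1 = (a : ℕ) then -1 else 0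

/-- The subdiagram indexed by `I` is simply laced. -/
def SimplyLaced (I : Finset (Fin ℓ)) : Prop :=
  ∀ i ∈ I, ∀ j ∈ I, i ≠ j →
    cpair (R.simple i) (R.simple j) = 0 ∨ cpair (R.simple i) (R.simple j) = -1

end RootSystemData

variable {ℓ : ℕ}

/-!
The short roots of `Φ_I` are stable under the reflections in `I`, so by connectedness every simple
root of `I` is non-orthogonal to some short root of `Φ_I`. This has two consequences.

* `θ_J` dominates `± γ` for every short root `γ` of `Φ_J`, so all its coordinates on `J` are
  positive; hence `θ_J ≤ θ_I` forces `J ⊆ I`.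
* Let `J ⊆ I`. If `θ_J` is short in `Φ_I`, it lies below `θ_I` by maximality of `θ_I`. Otherwise
  some short root `w` of `Φ_I` is antidominant for `J`, not orthogonal to `J`, and shorter than all
  of `Φ_J`. Its pairing with a neighbour in `J` is `-1`, and comparing norms shows that it has
  exactly one neighbour `x` in `J`. Replacing `w` by its reflection `w + x` and `J` by `J \ {x}`
  peels off `J` one simple root at a time, so that `J` is a chain of type A.
-/

section Pairing

lemma cpair_self {α : E} (hα : α ≠ 0) : cpair α α = 2 :=
  mul_div_cancel_right₀ _ (inner_self_ne_zero.2 hα)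

lemma cpair_mul_inner_self {α : E} (hα : α ≠ 0) (x : E) : cpair x α * ⟪α, α⟫ = 2 * ⟪x, α⟫ :=
  div_mul_cancel₀ _ (inner_self_ne_zero.2 hα)

lemma cpair_mul_inner_self_comm {x y : E} (hx : x ≠ 0) (hy : y ≠ 0) :
    cpair x y * ⟪y, y⟫ = cpair y x * ⟪x, x⟫ := by
  rw [cpair_mul_inner_self hy, cpair_mul_inner_self hx, real_inner_comm]

lemma cpair_eq_zero_iff {α : E} (hα : α ≠ 0) {x : E} : cpair x α = 0 ↔ ⟪x, α⟫ = 0 := by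
  simp [cpair, hα]

lemma cpair_pos_iff {α : E} (hα : α ≠ 0) {x : E} : 0 < cpair x α ↔ 0 < ⟪x, α⟫ := by
  rw [cpair, div_pos_iff_of_pos_right (real_inner_self_pos.2 hα)]
  exact mul_pos_iff_of_pos_left two_pos

lemma cpair_neg_iff {α : E} (hα : α ≠ 0) {x : E} : cpair x α < 0 ↔ ⟪x, α⟫ < 0 := by
  simpa [cpair, neg_div] using cpair_pos_iff hα (x := -x)

lemma wrefl_self {α : E} (hα : α ≠ 0) : wrefl α α = -α := by
  rw [wrefl, cpair_self hα]
  module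

lemma inner_wrefl_left {α : E} (hα : α ≠ 0) (x : E) : ⟪wrefl α x, α⟫ = -⟪x, α⟫ := by
  rw [wrefl, inner_sub_left, real_inner_smul_left, cpair_mul_inner_self hα]
  ring

lemma inner_wrefl_wrefl {α : E} (hα : α ≠ 0) (x : E) : ⟪wrefl α x, wrefl α x⟫ = ⟪x, x⟫ := by
  simp only [wrefl, inner_sub_left, inner_sub_right, real_inner_smul_left, real_inner_smul_right,
    real_inner_comm x α]
  linear_combination cpair x α * cpair_mul_inner_self hα x

lemma cpair_mul_cpair_lt_four {x y : E} (h : LinearIndependent ℝ ![x, y]) :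
    cpair x y * cpair y x < 4 := by
  have hx : x ≠ 0 := h.ne_zero 0
  have hy : y ≠ 0 := h.ne_zero 1
  have hz : x - (cpair x y / 2) • y ≠ 0 := fun h0 =>
    one_ne_zero (LinearIndependent.pair_iff.1 h 1 (-(cpair x y / 2)) (by rw [← h0]; module)).1
  have hxy := cpair_mul_inner_self hy x
  have hyx := cpair_mul_inner_self hx y
  have hproj : 4 * ⟪x - (cpair x y / 2) • y, x - (cpair x y / 2) • y⟫ =
      (4 - cpair x y * cpair y x) * ⟪x, x⟫ := by
    simp only [inner_sub_left, inner_sub_right, real_inner_smul_left, real_inner_smul_right]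
    rw [real_inner_comm x y] at hyx ⊢
    linear_combination cpair x y * hxy + cpair x y * hyx
  have hpos := real_inner_self_pos.2 hz
  have := pos_of_mul_pos_left (hproj ▸ mul_pos four_pos hpos) real_inner_self_nonneg
  linarith

end Pairing

namespace RootSystemData

variable {R : RootSystemData ℓ E} {I J : Finset (Fin ℓ)}

section Roots

variable (R) in
lemma simple_ne_zero (i : Fin ℓ) : R.simple i ≠ 0 :=
  R.root_ne_zero _ (R.simple_mem i)

lemma neg_mem_roots {α : E} (hα : α ∈ R.roots) : -α ∈ R.roots :=
  wrefl_self (R.root_ne_zero α hα) ▸ R.reflect_mem α hα α hα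

variable {α β : E}

lemma cpair_eq_neg_one_of_neg_two_lt (hα : α ∈ R.roots) (hβ : β ∈ R.roots) (hneg : ⟪α, β⟫ < 0)
    (hlt : -2 < cpair α β) : cpair α β = -1 := by
  obtain ⟨n, hn⟩ := R.cpair_int β hβ α hα
  have hn0 := (cpair_neg_iff (R.root_ne_zero β hβ)).2 hneg
  rw [hn] at hlt hn0 ⊢
  norm_cast at *
  omega

lemma cpair_eq_neg_one_of_inner_self_lt (hα : α ∈ R.roots) (hβ : β ∈ R.roots)
    (hind : LinearIndependent ℝ ![α, β]) (hneg : ⟪α, β⟫ < 0) (hlt : ⟪α, α⟫ < ⟪β, β⟫) :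
    cpair α β = -1 := by
  have hα0 := R.root_ne_zero α hα
  have hβ0 := R.root_ne_zero β hβ
  have hcomm := cpair_mul_inner_self_comm hα0 hβ0
  have hneg' := (cpair_neg_iff hβ0).2 hneg
  have hcmp : cpair β α < cpair α β := by nlinarith [real_inner_self_pos.2 hα0]
  have hprod := cpair_mul_cpair_lt_four hind
  exact cpair_eq_neg_one_of_neg_two_lt hα hβ hneg (by nlinarith)

lemma inner_self_eq_two_or_three_mul (hα : α ∈ R.roots) (hβ : β ∈ R.roots)
    (hind : LinearIndependent ℝ ![α, β]) (hneg : ⟪α, β⟫ < 0) (hlt : ⟪α, α⟫ < ⟪β, β⟫) :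
    ⟪β, β⟫ = 2 * ⟪α, α⟫ ∨ ⟪β, β⟫ = 3 * ⟪α, α⟫ := by
  have hα0 := R.root_ne_zero α hα
  have hone := cpair_eq_neg_one_of_inner_self_lt hα hβ hind hneg hlt
  obtain ⟨n, hn⟩ := R.cpair_int α hα β hβ
  have hratio : ⟪β, β⟫ = -n * ⟪α, α⟫ := by
    have hcomm := cpair_mul_inner_self_comm hα0 (R.root_ne_zero β hβ)
    rw [hone, hn] at hcomm
    linarith
  have hn_lt : (n : ℝ) < -1 := by nlinarith [real_inner_self_pos.2 hα0]
  have hn_gt : (-4 : ℝ) < n := by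
    have := cpair_mul_cpair_lt_four hind
    rw [hone, hn] at this
    linarith
  norm_cast at hn_lt hn_gt
  obtain rfl | rfl : n = -2 ∨ n = -3 := by omega
  · exact .inl (by simpa using hratio)
  · exact .inr (by simpa using hratio)

end Roots

section Coordinates

variable (R) in
/-- Coordinates with respect to the simple roots, extended linearly (and arbitrarily) from the span
of the roots to all of `E`. -/
def coord : E →ₗ[ℝ] Fin ℓ → ℝ := (Fintype.linearCombination ℝ R.simple).leftInverse

variable (R) in
lemma coord_sum_smul (c : Fin ℓ → ℝ) : R.coord (∑ i, c i • R.simple i) = c := by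
  rw [← Fintype.linearCombination_apply]
  exact LinearMap.leftInverse_apply_of_inj
    (LinearMap.ker_eq_bot.2 R.simple_indep.fintypeLinearCombination_injective) c

variable (R) in
lemma coord_simple (i : Fin ℓ) : R.coord (R.simple i) = Pi.single i 1 := by
  rw [← R.coord_sum_smul (Pi.single i 1)]
  simp [Pi.single_apply]

variable (R) in
lemma coord_wrefl_simple (i : Fin ℓ) (x : E) :
    R.coord (wrefl (R.simple i) x) = R.coord x - Pi.single i (cpair x (R.simple i)) := by
  rw [wrefl, map_sub, map_smul, coord_simple, ← Pi.single_smul, smul_eq_mul, mul_one]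

lemma coord_nonneg_or_nonpos {α : E} (hα : α ∈ R.roots) : 0 ≤ R.coord α ∨ R.coord α ≤ 0 := by
  obtain ⟨c, rfl⟩ | ⟨c, rfl⟩ := R.root_decomp α hα
  · rw [coord_sum_smul]
    exact .inl fun i => (c i).cast_nonneg
  · rw [map_neg, coord_sum_smul]
    exact .inr fun i => neg_nonpos.2 (c i).cast_nonneg

lemma wle.coord_le {x y : E} (h : R.wle x y) : R.coord x ≤ R.coord y := by
  obtain ⟨c, hc⟩ := h
  have hcoord := congrArg R.coord hc
  rw [coord_sum_smul, map_sub] at hcoord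
  rw [← sub_nonneg, hcoord]
  exact fun i => Nat.cast_nonneg (c i)

variable (R) in
lemma inner_simple_nonpos {i j : Fin ℓ} (hij : i ≠ j) : ⟪R.simple i, R.simple j⟫ ≤ 0 := by
  by_contra! hpos
  rw [← cpair_pos_iff (R.simple_ne_zero j)] at hpos
  have hroot := R.reflect_mem _ (R.simple_mem j) _ (R.simple_mem i)
  have hcoord := R.coord_wrefl_simple j (R.simple i)
  rw [coord_simple] at hcoord
  rcases coord_nonneg_or_nonpos hroot with hsign | hsign
  · have := hsign j
    simp only [hcoord, Pi.zero_apply, Pi.sub_apply, Pi.single_eq_same,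
      Pi.single_eq_of_ne hij.symm] at this
    linarith
  · have := hsign i
    simp only [hcoord, Pi.zero_apply, Pi.sub_apply, Pi.single_eq_same,
      Pi.single_eq_of_ne hij] at this
    linarith

end Coordinates

section Subsystem

lemma isRootOf_iff {β : E} :
    R.IsRootOf I β ↔ β ∈ R.roots ∧ ∀ i, R.coord β i ≠ 0 → i ∈ I := by
  refine and_congr_right fun hβ => ⟨?_, fun hsupp => ?_⟩
  · rintro ⟨c, hc, rfl⟩ i hi
    rw [coord_sum_smul] at hi
    exact hc i (mod_cast hi)
  · obtain ⟨c, rfl⟩ : ∃ c : Fin ℓ → ℤ, β = ∑ i, (c i : ℝ) • R.simple i := by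
      obtain ⟨c, rfl⟩ | ⟨c, rfl⟩ := R.root_decomp β hβ
      · exact ⟨fun i => c i, by simp⟩
      · exact ⟨fun i => -c i, by simp⟩
    rw [coord_sum_smul] at hsupp
    exact ⟨c, fun i hi => hsupp i (mod_cast hi), rfl⟩

lemma isRootOf_simple {i : Fin ℓ} (hi : i ∈ I) : R.IsRootOf I (R.simple i) := by
  refine isRootOf_iff.2 ⟨R.simple_mem i, fun j hj => ?_⟩
  rw [coord_simple] at hj
  obtain rfl : j = i := by_contra fun hji => hj (Pi.single_eq_of_ne hji _)
  exact hi

lemma IsRootOf.mono {β : E} (hβ : R.IsRootOf J β) (hJI : J ⊆ I) : R.IsRootOf I β :=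
  ⟨hβ.1, hβ.2.imp fun _ hc => ⟨fun i hi => hJI (hc.1 i hi), hc.2⟩⟩

lemma IsRootOf.exists_inner_simple_ne_zero {β : E} (hβ : R.IsRootOf I β) :
    ∃ i ∈ I, ⟪β, R.simple i⟫ ≠ 0 := by
  by_contra! horth
  obtain ⟨hroot, c, hc, hsum⟩ := hβ
  refine R.root_ne_zero β hroot (inner_self_eq_zero (𝕜 := ℝ).1 ?_)
  conv_lhs => rw [hsum, inner_sum, ← hsum]
  refine Finset.sum_eq_zero fun i _ => ?_
  by_cases hi : c i = 0
  · simp [hi]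
  · rw [real_inner_smul_right, horth i (hc i hi), mul_zero]

lemma IsShortRootOf.neg {β : E} (hβ : R.IsShortRootOf I β) : R.IsShortRootOf I (-β) := by
  obtain ⟨hroot, hmin⟩ := hβ
  refine ⟨isRootOf_iff.2 ⟨neg_mem_roots hroot.1, fun i hi => ?_⟩, by simpa using hmin⟩
  rw [map_neg, Pi.neg_apply, neg_ne_zero] at hi
  exact (isRootOf_iff.1 hroot).2 i hi

lemma IsShortRootOf.wrefl_simple {β : E} (hβ : R.IsShortRootOf I β) {i : Fin ℓ} (hi : i ∈ I) :
    R.IsShortRootOf I (wrefl (R.simple i) β) := by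
  obtain ⟨hroot, hmin⟩ := hβ
  refine ⟨isRootOf_iff.2 ⟨R.reflect_mem _ (R.simple_mem i) _ hroot.1, fun j hj => ?_⟩,
    by rwa [inner_wrefl_wrefl (R.simple_ne_zero i)]⟩
  rcases eq_or_ne j i with rfl | hji
  · exact hi
  · rw [coord_wrefl_simple, Pi.sub_apply, Pi.single_eq_of_ne hji, sub_zero] at hj
    exact (isRootOf_iff.1 hroot).2 j hj

lemma Connected.exists_isShortRootOf_inner_ne_zero (hI : R.Connected I) {β : E}
    (hβ : R.IsShortRootOf I β) {i : Fin ℓ} (hi : i ∈ I) :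
    ∃ γ, R.IsShortRootOf I γ ∧ ⟪γ, R.simple i⟫ ≠ 0 := by
  classical
  by_contra! horth
  let S := I.filter fun i => ∀ γ, R.IsShortRootOf I γ → ⟪γ, R.simple i⟫ = 0
  have hSI : S = I := by
    refine hI.2 S (Finset.filter_subset _ _) ⟨i, Finset.mem_filter.2 ⟨hi, horth⟩⟩ ?_
    intro s hs j hj hjS
    obtain ⟨γ, hγ, hγj⟩ : ∃ γ, R.IsShortRootOf I γ ∧ ⟪γ, R.simple j⟫ ≠ 0 := by
      simpa [S, hj] using hjS
    -- `γ` and its reflection in `j` are both orthogonal to `s`, hence so is their difference.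
    have hs' := (Finset.mem_filter.1 hs).2
    have hdiff := hs' _ (hγ.wrefl_simple hj)
    rw [wrefl, inner_sub_left, hs' γ hγ, real_inner_smul_left, zero_sub, neg_eq_zero,
      real_inner_comm] at hdiff
    exact (mul_eq_zero.1 hdiff).resolve_left (mt (cpair_eq_zero_iff (R.simple_ne_zero j)).1 hγj)
  obtain ⟨j, hj, hβj⟩ := hβ.1.exists_inner_simple_ne_zero
  rw [← hSI] at hj
  exact hβj ((Finset.mem_filter.1 hj).2 β hβ)

lemma IsHighestShortRoot.coord_pos {θ : E} (hI : R.Connected I) (hθ : R.IsHighestShortRoot I θ)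
    {i : Fin ℓ} (hi : i ∈ I) : 0 < R.coord θ i := by
  obtain ⟨γ, hγ, hγi⟩ := hI.exists_isShortRootOf_inner_ne_zero hθ.1 hi
  have habs_le {δ : E} (hδ : R.IsShortRootOf I δ) : |R.coord δ i| ≤ R.coord θ i := by
    refine abs_le'.2 ⟨(hθ.2 δ hδ).coord_le i, ?_⟩
    simpa using (hθ.2 _ hδ.neg).coord_le i
  by_contra! hle
  have hγ0 := abs_nonpos_iff.1 ((habs_le hγ).trans hle)
  have hrefl0 := abs_nonpos_iff.1 ((habs_le (hγ.wrefl_simple hi)).trans hle)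
  rw [coord_wrefl_simple, Pi.sub_apply, hγ0, Pi.single_eq_same, zero_sub, neg_eq_zero,
    cpair_eq_zero_iff (R.simple_ne_zero i)] at hrefl0
  exact hγi hrefl0

lemma IsShortRootOf.exists_antidominant {γ : E} (hγ : R.IsShortRootOf I γ) (hJI : J ⊆ I)
    (hγJ : ∃ j ∈ J, ⟪γ, R.simple j⟫ ≠ 0) :
    ∃ w, R.IsShortRootOf I w ∧ (∀ j ∈ J, ⟪w, R.simple j⟫ ≤ 0) ∧
      ∃ j ∈ J, ⟪w, R.simple j⟫ ≠ 0 := by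
  classical
  let T := R.roots.filter fun w => R.IsShortRootOf I w ∧ ∃ j ∈ J, ⟪w, R.simple j⟫ ≠ 0
  have hT {w : E} (hw : R.IsShortRootOf I w) (hwJ : ∃ j ∈ J, ⟪w, R.simple j⟫ ≠ 0) : w ∈ T :=
    Finset.mem_filter.2 ⟨hw.1.1, hw, hwJ⟩
  -- A root of minimal height works, since reflecting in a `j` with `0 < ⟪w, j⟫` lowers the height.
  obtain ⟨w, hwT, hmin⟩ := T.exists_min_image (fun w => ∑ i, R.coord w i) ⟨γ, hT hγ hγJ⟩
  obtain ⟨-, hw, hwJ⟩ := Finset.mem_filter.1 hwT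
  refine ⟨w, hw, fun j hj => ?_, hwJ⟩
  by_contra! hpos
  have hrefl : wrefl (R.simple j) w ∈ T := by
    refine hT (hw.wrefl_simple (hJI hj)) ⟨j, hj, ?_⟩
    rw [inner_wrefl_left (R.simple_ne_zero j)]
    exact neg_ne_zero.2 hpos.ne'
  have hheight := hmin _ hrefl
  simp only [coord_wrefl_simple, Pi.sub_apply, Finset.sum_sub_distrib, Finset.sum_pi_single',
    Finset.mem_univ, if_true] at hheight
  linarith [(cpair_pos_iff (R.simple_ne_zero j)).2 hpos]

end Subsystem

section TypeAChain

variable (R) in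
/-- The simple roots indexed by `f` form, in this order, a Dynkin diagram of type A. -/
def IsTypeAChain {n : ℕ} (f : Fin n → Fin ℓ) : Prop :=
  ∀ a b : Fin n, cpair (R.simple (f b)) (R.simple (f a)) =
    if a = b then 2
    else if (a : ℕ) + 1 = (b : ℕ) ∨ (b : ℕ) + 1 = (a : ℕ) then -1 else 0

lemma IsTypeAChain.cons {n : ℕ} {f : Fin n → Fin ℓ} (hf : R.IsTypeAChain f) {x : Fin ℓ}
    (hx : ∀ a, cpair (R.simple x) (R.simple (f a)) = if (a : ℕ) = 0 then -1 else 0)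
    (hx' : ∀ a, cpair (R.simple (f a)) (R.simple x) = if (a : ℕ) = 0 then -1 else 0) :
    R.IsTypeAChain (Fin.cons x f : Fin (n + 1) → Fin ℓ) := by
  intro a b
  cases a using Fin.cases with
  | zero =>
    cases b using Fin.cases with
    | zero => simp [cpair_self (R.simple_ne_zero x)]
    | succ b => simp [hx', (Fin.succ_ne_zero b).symm, eq_comm]
  | succ a =>
    cases b using Fin.cases with
    | zero => simp [hx, eq_comm]
    | succ b => simp [hf a b]

lemma IsTypeAChain.injective {n : ℕ} {f : Fin n → Fin ℓ} (hf : R.IsTypeAChain f) :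
    Function.Injective f := by
  intro a b hab
  by_contra hne
  have hentry := hf a b
  rw [hab, cpair_self (R.simple_ne_zero _), if_neg hne] at hentry
  split_ifs at hentry <;> norm_num at hentry

lemma IsTypeAChain.isTypeASub {f : Fin J.card → Fin ℓ} (hf : R.IsTypeAChain f)
    (hfJ : ∀ a, f a ∈ J) : R.IsTypeASub J := by
  have hinj : Function.Injective fun a => (⟨f a, hfJ a⟩ : {i // i ∈ J}) :=
    fun a b hab => hf.injective (congrArg Subtype.val hab)
  exact ⟨.ofBijective _ ((Fintype.bijective_iff_injective_and_card _).2 ⟨hinj, by simp⟩), hf⟩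

variable (R) in
/-- `w` is a root outside the span of `J`, antidominant for `J` and shorter than the simple roots in
`J`, such that adding the node `w` to the diagram `J` gives a connected diagram. This is the
invariant of the induction that recognizes `J` as a chain starting next to `w`. -/
structure IsShorterExtension (J : Finset (Fin ℓ)) (w : E) : Prop where
  mem_roots : w ∈ R.roots
  exists_coord_ne_zero : ∃ i ∉ J, R.coord w i ≠ 0
  inner_nonpos : ∀ j ∈ J, ⟪w, R.simple j⟫ ≤ 0
  inner_self_lt : ∀ j ∈ J, ⟪w, w⟫ < ⟪R.simple j, R.simple j⟫
  connected : ∀ S ⊆ J, S.Nonempty → (∀ s ∈ S, ⟪w, R.simple s⟫ = 0) →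
    ∃ s ∈ S, ∃ j ∈ J, j ∉ S ∧ ⟪R.simple s, R.simple j⟫ ≠ 0

namespace IsShorterExtension

variable {w : E} {x y : Fin ℓ}

lemma inner_neg (hw : R.IsShorterExtension J w) (hx : x ∈ J) (hwx : ⟪w, R.simple x⟫ ≠ 0) :
    ⟪w, R.simple x⟫ < 0 :=
  (hw.inner_nonpos x hx).lt_of_ne hwx

lemma linearIndependent (hw : R.IsShorterExtension J w) (hx : x ∈ J) :
    LinearIndependent ℝ ![w, R.simple x] := by
  obtain ⟨i, hiJ, hi⟩ := hw.exists_coord_ne_zero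
  have hix : i ≠ x := fun h => hiJ (h ▸ hx)
  rw [LinearIndependent.pair_symm_iff, LinearIndependent.pair_iff' (R.simple_ne_zero x)]
  rintro t rfl
  simp [coord_simple, hix] at hi

lemma cpair_eq_neg_one (hw : R.IsShorterExtension J w) (hx : x ∈ J)
    (hwx : ⟪w, R.simple x⟫ ≠ 0) : cpair w (R.simple x) = -1 :=
  cpair_eq_neg_one_of_inner_self_lt hw.mem_roots (R.simple_mem x) (hw.linearIndependent hx)
    (hw.inner_neg hx hwx) (hw.inner_self_lt x hx)

lemma inner_self_eq_two_or_three_mul (hw : R.IsShorterExtension J w) (hx : x ∈ J)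
    (hwx : ⟪w, R.simple x⟫ ≠ 0) :
    ⟪R.simple x, R.simple x⟫ = 2 * ⟪w, w⟫ ∨ ⟪R.simple x, R.simple x⟫ = 3 * ⟪w, w⟫ :=
  RootSystemData.inner_self_eq_two_or_three_mul hw.mem_roots (R.simple_mem x)
    (hw.linearIndependent hx) (hw.inner_neg hx hwx) (hw.inner_self_lt x hx)

lemma wrefl_simple (hw : R.IsShorterExtension J w) (hx : x ∈ J) (hwx : ⟪w, R.simple x⟫ ≠ 0) :
    wrefl (R.simple x) w = w + R.simple x := by
  rw [wrefl, hw.cpair_eq_neg_one hx hwx]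
  module

lemma eq_of_inner_ne_zero (hw : R.IsShorterExtension J w) (hx : x ∈ J) (hy : y ∈ J)
    (hwx : ⟪w, R.simple x⟫ ≠ 0) (hwy : ⟪w, R.simple y⟫ ≠ 0) : x = y := by
  by_contra hxy
  have hnorm {z : Fin ℓ} (hz : z ∈ J) (hwz : ⟪w, R.simple z⟫ ≠ 0) :
      2 * ⟪w, R.simple z⟫ = -⟪R.simple z, R.simple z⟫ ∧
        2 * ⟪w, w⟫ ≤ ⟪R.simple z, R.simple z⟫ := by
    constructor
    · rw [← cpair_mul_inner_self (R.simple_ne_zero z), hw.cpair_eq_neg_one hz hwz, neg_one_mul]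
    · rcases hw.inner_self_eq_two_or_three_mul hz hwz with h | h <;>
        linarith [real_inner_self_nonneg (x := w)]
  -- Two neighbours `x` and `y` would make the norm of `2 w + x + y` nonpositive.
  have hne : (2 : ℝ) • w + R.simple x + R.simple y ≠ 0 := by
    obtain ⟨i, hiJ, hi⟩ := hw.exists_coord_ne_zero
    have hix : i ≠ x := fun h => hiJ (h ▸ hx)
    have hiy : i ≠ y := fun h => hiJ (h ▸ hy)
    intro h0
    have := congrFun (congrArg R.coord h0) i
    simp [coord_simple, hix, hiy, hi] at this
  have hpos := real_inner_self_pos.2 hne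
  simp only [inner_add_left, inner_add_right, real_inner_smul_left, real_inner_smul_right,
    real_inner_comm w, real_inner_comm (R.simple x) (R.simple y)] at hpos
  linarith [hnorm hx hwx, hnorm hy hwy, R.inner_simple_nonpos hxy]

lemma inner_add_simple (hw : R.IsShorterExtension J w) (hx : x ∈ J) (hy : y ∈ J.erase x)
    (hwx : ⟪w, R.simple x⟫ ≠ 0) : ⟪w + R.simple x, R.simple y⟫ = ⟪R.simple x, R.simple y⟫ := by
  obtain ⟨hyx, hyJ⟩ := Finset.mem_erase.1 hy
  have hwy : ⟪w, R.simple y⟫ = 0 :=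
    of_not_not fun hwy => hyx (hw.eq_of_inner_ne_zero hyJ hx hwy hwx)
  rw [inner_add_left, hwy, zero_add]

lemma add_simple (hw : R.IsShorterExtension J w) (hx : x ∈ J) (hwx : ⟪w, R.simple x⟫ ≠ 0) :
    R.IsShorterExtension (J.erase x) (w + R.simple x) where
  mem_roots := hw.wrefl_simple hx hwx ▸ R.reflect_mem _ (R.simple_mem x) _ hw.mem_roots
  exists_coord_ne_zero := by
    obtain ⟨i, hiJ, hi⟩ := hw.exists_coord_ne_zero
    have hix : i ≠ x := fun h => hiJ (h ▸ hx)
    exact ⟨i, mt Finset.mem_of_mem_erase hiJ, by simpa [coord_simple, hix] using hi⟩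
  inner_nonpos y hy := by
    rw [hw.inner_add_simple hx hy hwx]
    exact R.inner_simple_nonpos (Finset.ne_of_mem_erase hy).symm
  inner_self_lt y hy := by
    rw [← hw.wrefl_simple hx hwx, inner_wrefl_wrefl (R.simple_ne_zero x)]
    exact hw.inner_self_lt y (Finset.mem_of_mem_erase hy)
  connected S hS hSne horth := by
    have hwS : ∀ s ∈ S, ⟪w, R.simple s⟫ = 0 := fun s hs => of_not_not fun hws =>
      Finset.ne_of_mem_erase (hS hs)
        (hw.eq_of_inner_ne_zero (Finset.mem_of_mem_erase (hS hs)) hx hws hwx)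
    obtain ⟨s, hs, j, hj, hjS, hsj⟩ :=
      hw.connected S (hS.trans (Finset.erase_subset x J)) hSne hwS
    refine ⟨s, hs, j, Finset.mem_erase.2 ⟨?_, hj⟩, hjS, hsj⟩
    rintro rfl
    rw [real_inner_comm, ← hw.inner_add_simple hx (hS hs) hwx] at hsj
    exact hsj (horth s hs)

lemma cpair_simple_eq_neg_one (hw : R.IsShorterExtension J w) (hx : x ∈ J) (hy : y ∈ J.erase x)
    (hwx : ⟪w, R.simple x⟫ ≠ 0) (hxy : ⟪R.simple x, R.simple y⟫ ≠ 0) :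
    cpair (R.simple x) (R.simple y) = -1 ∧ cpair (R.simple y) (R.simple x) = -1 := by
  have hinner := hw.inner_add_simple hx hy hwx
  have hw' := hw.add_simple hx hwx
  have hwy' : ⟪w + R.simple x, R.simple y⟫ ≠ 0 := hinner ▸ hxy
  have hxy_one : cpair (R.simple x) (R.simple y) = -1 := by
    rw [cpair, ← hinner]
    exact hw'.cpair_eq_neg_one hy hwy'
  have hneg : ⟪R.simple y, R.simple x⟫ < 0 := by
    rw [real_inner_comm, ← hinner]
    exact hw'.inner_neg hy hwy'
  refine ⟨hxy_one, cpair_eq_neg_one_of_neg_two_lt (R.simple_mem y) (R.simple_mem x) hneg ?_⟩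
  -- The squared lengths of `x` and `y` are 2 or 3 times that of `w`, so their ratio is below 2.
  have hnorm : ⟪w + R.simple x, w + R.simple x⟫ = ⟪w, w⟫ := by
    rw [← hw.wrefl_simple hx hwx, inner_wrefl_wrefl (R.simple_ne_zero x)]
  have hlt : ⟪R.simple y, R.simple y⟫ < 2 * ⟪R.simple x, R.simple x⟫ := by
    have hwpos := real_inner_self_pos.2 (R.root_ne_zero w hw.mem_roots)
    have hy_norm := hw'.inner_self_eq_two_or_three_mul hy hwy'
    rw [hnorm] at hy_norm
    rcases hw.inner_self_eq_two_or_three_mul hx hwx with h | h <;>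
      rcases hy_norm with h' | h' <;> linarith
  have hcomm := cpair_mul_inner_self_comm (R.simple_ne_zero x) (R.simple_ne_zero y)
  rw [hxy_one] at hcomm
  refine lt_of_mul_lt_mul_right ?_ (real_inner_self_nonneg (x := R.simple x))
  linarith

lemma exists_inner_ne_zero (hw : R.IsShorterExtension J w) (hJ : J.Nonempty) :
    ∃ x ∈ J, ⟪w, R.simple x⟫ ≠ 0 := by
  by_contra! horth
  obtain ⟨-, -, j, hj, hjJ, -⟩ := hw.connected J subset_rfl hJ horth
  exact hjJ hj

lemma exists_isTypeAChain {n : ℕ} (hw : R.IsShorterExtension J w) (hn : J.card = n) :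
    ∃ f : Fin n → Fin ℓ, (∀ a, f a ∈ J) ∧ R.IsTypeAChain f ∧
      ∀ a, ⟪w, R.simple (f a)⟫ ≠ 0 ↔ (a : ℕ) = 0 := by
  induction n generalizing J w with
  | zero => exact ⟨Fin.elim0, fun a => a.elim0, fun a => a.elim0, fun a => a.elim0⟩
  | succ n ih =>
    obtain ⟨x, hx, hwx⟩ := hw.exists_inner_ne_zero (Finset.card_pos.1 (by omega))
    obtain ⟨f, hfJ, hf, hfw⟩ := ih (hw.add_simple hx hwx)
      (by rw [Finset.card_erase_of_mem hx, hn, Nat.add_sub_cancel])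
    have hfw' (a : Fin n) : ⟪R.simple x, R.simple (f a)⟫ ≠ 0 ↔ (a : ℕ) = 0 := by
      rw [← hw.inner_add_simple hx (hfJ a) hwx, hfw]
    have horth {a : Fin n} (ha : (a : ℕ) ≠ 0) : ⟪R.simple x, R.simple (f a)⟫ = 0 :=
      of_not_not (mt (hfw' a).1 ha)
    refine ⟨Fin.cons x f, Fin.cases hx fun a => Finset.mem_of_mem_erase (hfJ a),
      hf.cons (fun a => ?_) (fun a => ?_), Fin.cases ?_ fun a => ?_⟩
    · split_ifs with ha
      · exact (hw.cpair_simple_eq_neg_one hx (hfJ a) hwx ((hfw' a).2 ha)).1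
      · exact (cpair_eq_zero_iff (R.simple_ne_zero _)).2 (horth ha)
    · split_ifs with ha
      · exact (hw.cpair_simple_eq_neg_one hx (hfJ a) hwx ((hfw' a).2 ha)).2
      · exact (cpair_eq_zero_iff (R.simple_ne_zero _)).2 ((real_inner_comm _ _).trans (horth ha))
    · simpa using hwx
    · obtain ⟨hne, hmem⟩ := Finset.mem_erase.1 (hfJ a)
      simpa using of_not_not fun hwa => hne (hw.eq_of_inner_ne_zero hmem hx hwa hwx)

lemma isTypeASub (hw : R.IsShorterExtension J w) : R.IsTypeASub J := by
  obtain ⟨f, hfJ, hf, -⟩ := hw.exists_isTypeAChain rfl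
  exact hf.isTypeASub hfJ

end IsShorterExtension

lemma IsShortRootOf.exists_isShorterExtension {θ : E} (hθ : R.IsShortRootOf I θ)
    (hI : R.Connected I) (hJ : R.Connected J) (hJI : J ⊆ I)
    (hlt : ∀ γ, R.IsRootOf J γ → ⟪θ, θ⟫ < ⟪γ, γ⟫) : ∃ w, R.IsShorterExtension J w := by
  obtain ⟨j, hj⟩ := hJ.1
  obtain ⟨γ, hγ, hγj⟩ := hI.exists_isShortRootOf_inner_ne_zero hθ (hJI hj)
  obtain ⟨w, hw, hanti, hwJ⟩ := hγ.exists_antidominant hJI ⟨j, hj, hγj⟩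
  have hwlt (δ : E) (hδ : R.IsRootOf J δ) : ⟪w, w⟫ < ⟪δ, δ⟫ := (hw.2 θ hθ.1).trans_lt (hlt δ hδ)
  refine ⟨w, hw.1.1, ?_, hanti, fun i hi => hwlt _ (isRootOf_simple hi), ?_⟩
  · by_contra! hsupp
    exact (hwlt w (isRootOf_iff.2 ⟨hw.1.1, fun i => not_imp_comm.1 (hsupp i)⟩)).false
  · intro S hS hSne horth
    by_contra! hsplit
    obtain rfl := hJ.2 S hS hSne hsplit
    obtain ⟨s, hs, hws⟩ := hwJ
    exact hws (horth s hs)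

end TypeAChain

namespace IsHighestShortRoot

variable {θI θJ : E}

lemma wle_of_subset (hθI : R.IsHighestShortRoot I θI) (hθJ : R.IsHighestShortRoot J θJ)
    (hI : R.Connected I) (hJ : R.Connected J) (hJA : ¬ R.IsTypeASub J) (hJI : J ⊆ I) :
    R.wle θJ θI := by
  have hle : ⟪θJ, θJ⟫ ≤ ⟪θI, θI⟫ := by
    by_contra! hlt
    obtain ⟨w, hw⟩ := hθI.1.exists_isShorterExtension hI hJ hJI
      fun γ hγ => hlt.trans_le (hθJ.1.2 γ hγ)
    exact hJA hw.isTypeASub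
  exact hθI.2 θJ ⟨hθJ.1.1.mono hJI, fun γ hγ => hle.trans (hθI.1.2 γ hγ)⟩

lemma subset_of_wle {β : E} (hθJ : R.IsHighestShortRoot J θJ) (hJ : R.Connected J)
    (hβ : R.IsRootOf I β) (hle : R.wle θJ β) : J ⊆ I := fun j hj =>
  (isRootOf_iff.1 hβ).2 j ((hθJ.coord_pos hJ hj).trans_le (hle.coord_le j)).ne'

end IsHighestShortRoot

end RootSystemData

theorem statement3_general (R : RootSystemData ℓ E) (I J : Finset (Fin ℓ))
    (hI : R.Connected I) (hJ : R.Connected J) (hJA : ¬ R.IsTypeASub J)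
    (θI θJ : E) (hθI : R.IsHighestShortRoot I θI) (hθJ : R.IsHighestShortRoot J θJ) :
    J ⊆ I ↔ R.wle θJ θI :=
  ⟨hθI.wle_of_subset hθJ hI hJ hJA, hθJ.subset_of_wle hJ hθI.1.1⟩

/-- For irreducible subsets `I`, `J` of the index set, neither of type A,
`J ⊆ I` if and only if `θ_J ≤ θ_I` in the dominant order. -/
theorem statement3 (R : RootSystemData ℓ E) (I J : Finset (Fin ℓ))
    (hI : R.Connected I) (hJ : R.Connected J)
    (hIA : ¬ R.IsTypeASub I) (hJA : ¬ R.IsTypeASub J)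
    (θI θJ : E) (hθI : R.IsHighestShortRoot I θI)
    (hθJ : R.IsHighestShortRoot J θJ) :
    J ⊆ I ↔ R.wle θJ θI :=
  statement3_general R I J hI hJ hJA θI θJ hθI hθJ
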